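/- arXiv:2107.08947 — 5 statements merged into one kernel-verified Lean document; each statement's English description precedes it below -/
import Mathlib

section
/- Let P be a nonzero polynomial with real coefficients of degree n, and let x, y ∈ ℝ satisfy P(x) = P(y) = 0. If for every i with 1 ≤ i ≤ n the signs of P^{(i)}(x) and P^{(i)}(y) agree (i.e., sign(P^{(i)}(x)) = sign(P^{(i)}(y)) as elements of {−1, 0, 1}), then x = y. -/
theorem thom_aux (n : ℕ) : ∀ (P : Polynomial ℝ), P.natDegree ≤ n → P ≠ 0 → ∀ x y : ℝ, x < y →
    (∀ i : ℕ, i ≤ P.natDegree → Real.sign ((Polynomial.derivative^[i] P).eval x) =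
        Real.sign ((Polynomial.derivative^[i] P).eval y)) →
    (∀ t ∈ Set.Icc x y, 0 < P.eval t) ∨ (∀ t ∈ Set.Icc x y, P.eval t < 0) := by
  have const : ∀ (P : Polynomial ℝ), P.natDegree = 0 → P ≠ 0 → ∀ x y : ℝ,
      (∀ t ∈ Set.Icc x y, 0 < P.eval t) ∨ (∀ t ∈ Set.Icc x y, P.eval t < 0) := by
    intro P hd hP x y
    rw [Polynomial.eq_C_of_natDegree_eq_zero hd] at hP ⊢
    have h0 : P.coeff 0 ≠ 0 := by
      intro h
      simp [h] at hP
    rcases lt_or_gt_of_ne h0 with h | h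
    · right; intro t _; simpa using h
    · left; intro t _; simpa using h
  induction n with
  | zero =>
    intro P hd hP x y _ _
    exact const P (by omega) hP x y
  | succ n ih =>
    intro P hd hP x y hxy hs
    by_cases h0 : P.natDegree = 0
    · exact const P h0 hP x y
    have hdd : P.derivative.natDegree < P.natDegree := Polynomial.natDegree_derivative_lt h0
    have hd0 : P.derivative ≠ 0 := fun h => h0 (Polynomial.natDegree_eq_zero_of_derivative_eq_zero h)
    have key := ih P.derivative (by omega) hd0 x y hxy (fun i hi => by
      have := hs (i+1) (by omega)
      simpa only [Function.iterate_succ_apply] using this)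
    have hs0 : Real.sign (P.eval x) = Real.sign (P.eval y) := by simpa using hs 0 (by omega)
    have hx : x ∈ Set.Icc x y := ⟨le_rfl, hxy.le⟩
    have hy : y ∈ Set.Icc x y := ⟨hxy.le, le_rfl⟩
    have sg : (0 < P.eval x ∧ 0 < P.eval y) ∨ (P.eval x = 0 ∧ P.eval y = 0) ∨
        (P.eval x < 0 ∧ P.eval y < 0) := by
      rcases lt_trichotomy (P.eval x) 0 with h | h | h <;>
      rcases lt_trichotomy (P.eval y) 0 with h' | h' | h' <;>
      simp only [Real.sign_of_neg, Real.sign_of_pos, Real.sign_zero, h, h'] at hs0 <;>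
      first
        | (norm_num at hs0; done)
        | simp [h, h']
    rcases key with hk | hk
    · have hm : StrictMonoOn (fun t => P.eval t) (Set.Icc x y) := by
        apply strictMonoOn_of_deriv_pos (convex_Icc x y) P.continuous.continuousOn
        intro t ht
        rw [Polynomial.deriv]
        exact hk t (interior_subset ht)
      have h1 := hm hx hy hxy
      simp only at h1
      rcases sg with h | h | h
      · left; intro t ht
        exact h.1.trans_le (hm.monotoneOn hx ht ht.1)
      · linarith [h.1, h.2]
      · right; intro t ht
        exact (hm.monotoneOn ht hy ht.2).trans_lt h.2
    · have hm : StrictAntiOn (fun t => P.eval t) (Set.Icc x y) := by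
        apply strictAntiOn_of_deriv_neg (convex_Icc x y) P.continuous.continuousOn
        intro t ht
        rw [Polynomial.deriv]
        exact hk t (interior_subset ht)
      have h1 := hm hx hy hxy
      simp only at h1
      rcases sg with h | h | h
      · left; intro t ht
        exact h.2.trans_le (hm.antitoneOn ht hy ht.2)
      · linarith [h.1, h.2]
      · right; intro t ht
        exact (hm.antitoneOn hx ht ht.1).trans_lt h.1

theorem thom_aux2 (P : Polynomial ℝ) (hP : P ≠ 0) (x y : ℝ)
    (hx : P.eval x = 0) (hy : P.eval y = 0)
    (hsign : ∀ i : ℕ, 1 ≤ i → i ≤ P.natDegree →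
      Real.sign ((Polynomial.derivative^[i] P).eval x) =
        Real.sign ((Polynomial.derivative^[i] P).eval y)) : ¬ x < y := by
  intro hxy
  have := thom_aux P.natDegree P le_rfl hP x y hxy (fun i hi => by
    rcases Nat.eq_zero_or_pos i with h | h
    · subst h; simp [hx, hy]
    · exact hsign i h hi)
  rcases this with h | h
  · exact (h x ⟨le_rfl, hxy.le⟩).ne' hx
  · exact (h x ⟨le_rfl, hxy.le⟩).ne hx

/-- Uniqueness of Thom encodings: two real roots of a nonzero polynomial `P` of degree `n`
at which all the derivatives `P^{(i)}`, `1 ≤ i ≤ n`, have the same signs, are equal. -/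
theorem thom_encoding_unique
    (P : Polynomial ℝ) (hP : P ≠ 0) (x y : ℝ)
    (hx : P.eval x = 0) (hy : P.eval y = 0)
    (hsign : ∀ i : ℕ, 1 ≤ i → i ≤ P.natDegree →
      Real.sign ((Polynomial.derivative^[i] P).eval x) =
        Real.sign ((Polynomial.derivative^[i] P).eval y)) :
    x = y := by
  have h1 := thom_aux2 P hP x y hx hy hsign
  have h2 := thom_aux2 P hP y x hy hx (fun i a b => (hsign i a b).symm)
  exact le_antisymm (not_lt.mp h2) (not_lt.mp h1)
end

section
/- Let P be a polynomial with real coefficients of degree n and let σ : {0, 1, …, n} → {−1, 0, 1} be a sign condition such that the set R(σ) = {x ∈ ℝ : sign(P^{(i)}(x)) = σ(i) for all 0 ≤ i ≤ n} is nonempty. Then the topological closure of R(σ) equals the realization of the associated weak sign condition, namely the set of x ∈ ℝ such that for all 0 ≤ i ≤ n: P^{(i)}(x) = 0 if σ(i) = 0, P^{(i)}(x) ≥ 0 if σ(i) = 1, and P^{(i)}(x) ≤ 0 if σ(i) = −1. -/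
open Polynomial in
lemma thom_mvt (P : Polynomial ℝ) (u v : ℝ) (h : u < v) :
    ∃ c, u < c ∧ c < v ∧ P.eval v - P.eval u = (derivative P).eval c * (v - u) := by
  obtain ⟨c, hc, e⟩ := exists_deriv_eq_slope (fun x => P.eval x) h
    P.continuous.continuousOn P.differentiable.differentiableOn
  refine ⟨c, hc.1, hc.2, ?_⟩
  rw [Polynomial.deriv] at e
  have : v - u ≠ 0 := by linarith
  rw [e]; field_simp

open Polynomial in
lemma thom_step (n : ℕ) : ∀ (P : Polynomial ℝ) (a b : ℝ), P.natDegree ≤ n →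
    (∀ i : ℕ, ((derivative^[i] P).eval a = 0 → (derivative^[i] P).eval b = 0) ∧
      (0 < (derivative^[i] P).eval a → 0 ≤ (derivative^[i] P).eval b) ∧
      ((derivative^[i] P).eval a < 0 → (derivative^[i] P).eval b ≤ 0)) →
    ∀ y, ((a < y ∧ y < b) ∨ (b < y ∧ y < a)) →
      (P.eval a = 0 → P.eval y = 0) ∧ (0 < P.eval a → 0 < P.eval y) ∧
      (P.eval a < 0 → P.eval y < 0) := by
  induction n with
  | zero =>
    intro P a b hP _ y _
    rw [Polynomial.eq_C_of_natDegree_le_zero hP]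
    simp
  | succ n ih =>
    intro P a b hP h y hy
    have h0 := h 0
    simp only [Function.iterate_zero, id] at h0
    have key := ih (derivative P) a b
      (by have := natDegree_derivative_le P; omega)
      (fun i => by
        have := h (i + 1)
        simpa only [Function.iterate_succ_apply] using this)
    obtain ⟨z0, z1, z2⟩ := h0
    have fin : ∀ p q s t : ℝ, (0 < s ∧ 0 < t ∨ s < 0 ∧ t < 0) →
        ((derivative P).eval a = 0 → p = 0) ∧ (0 < (derivative P).eval a → 0 < p) ∧
          ((derivative P).eval a < 0 → p < 0) →
        ((derivative P).eval a = 0 → q = 0) ∧ (0 < (derivative P).eval a → 0 < q) ∧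
          ((derivative P).eval a < 0 → q < 0) →
        P.eval y - P.eval a = p * s → P.eval b - P.eval y = q * t →
        (P.eval a = 0 → P.eval y = 0) ∧ (0 < P.eval a → 0 < P.eval y) ∧
          (P.eval a < 0 → P.eval y < 0) := by
      intro p q s t hst hp hq e1 e2
      have cases3 : (p * s = 0 ∧ q * t = 0) ∨ (0 < p * s ∧ 0 < q * t) ∨
          (p * s < 0 ∧ q * t < 0) := by
        rcases lt_trichotomy ((derivative P).eval a) 0 with g | g | g
        · have p1 := hp.2.2 g
          have q1 := hq.2.2 g
          rcases hst with ⟨s1, t1⟩ | ⟨s1, t1⟩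
          · exact Or.inr (Or.inr ⟨mul_neg_of_neg_of_pos p1 s1, mul_neg_of_neg_of_pos q1 t1⟩)
          · exact Or.inr (Or.inl ⟨mul_pos_of_neg_of_neg p1 s1, mul_pos_of_neg_of_neg q1 t1⟩)
        · left; rw [hp.1 g, hq.1 g]; simp
        · have p1 := hp.2.1 g
          have q1 := hq.2.1 g
          rcases hst with ⟨s1, t1⟩ | ⟨s1, t1⟩
          · exact Or.inr (Or.inl ⟨mul_pos p1 s1, mul_pos q1 t1⟩)
          · exact Or.inr (Or.inr ⟨mul_neg_of_pos_of_neg p1 s1, mul_neg_of_pos_of_neg q1 t1⟩)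
      rw [← e1, ← e2] at cases3
      refine ⟨fun g => ?_, fun g => ?_, fun g => ?_⟩
      · have := z0 g
        rcases cases3 with c | c | c <;> linarith [c.1, c.2]
      · have := z1 g
        rcases cases3 with c | c | c <;> linarith [c.1, c.2]
      · have := z2 g
        rcases cases3 with c | c | c <;> linarith [c.1, c.2]
    rcases hy with ⟨y1, y2⟩ | ⟨y1, y2⟩
    · obtain ⟨c, c1, c2, e1⟩ := thom_mvt P a y y1
      obtain ⟨d, d1, d2, e2⟩ := thom_mvt P y b y2
      exact fin _ _ _ _ (Or.inl ⟨by linarith, by linarith⟩)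
        (key c (Or.inl ⟨c1, by linarith⟩)) (key d (Or.inl ⟨by linarith, d2⟩)) e1 e2
    · obtain ⟨c, c1, c2, e1⟩ := thom_mvt P y a y2
      obtain ⟨d, d1, d2, e2⟩ := thom_mvt P b y y1
      exact fin _ _ (y - a) (b - y) (Or.inr ⟨by linarith, by linarith⟩)
        (key c (Or.inr ⟨by linarith, c2⟩)) (key d (Or.inr ⟨d1, by linarith⟩))
        (by linarith) (by linarith)

/-- Generalized Thom lemma (univariate case): if the realization `R(σ)` of a sign
condition on `P, P', …, P^{(n)}` is nonempty, then its topological closure equals the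
realization of the associated weak sign condition. -/
theorem closure_of_sign_condition_realization
    (P : Polynomial ℝ) (σ : ℕ → ℝ)
    (hσ : ∀ i : ℕ, σ i = -1 ∨ σ i = 0 ∨ σ i = 1)
    (hne : {x : ℝ | ∀ i : ℕ, i ≤ P.natDegree →
      Real.sign ((Polynomial.derivative^[i] P).eval x) = σ i}.Nonempty) :
    closure {x : ℝ | ∀ i : ℕ, i ≤ P.natDegree →
        Real.sign ((Polynomial.derivative^[i] P).eval x) = σ i}
      = {x : ℝ | ∀ i : ℕ, i ≤ P.natDegree →
          (σ i = 0 → (Polynomial.derivative^[i] P).eval x = 0) ∧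
          (σ i = 1 → 0 ≤ (Polynomial.derivative^[i] P).eval x) ∧
          (σ i = -1 → (Polynomial.derivative^[i] P).eval x ≤ 0)} := by
  apply Set.Subset.antisymm
  · apply closure_minimal
    · intro x hx i hi
      have h := hx i hi
      rcases lt_trichotomy ((Polynomial.derivative^[i] P).eval x) 0 with g | g | g
      · rw [Real.sign_of_neg g] at h
        rw [← h]
        exact ⟨fun k => by norm_num at k, fun k => by norm_num at k, fun _ => g.le⟩
      · rw [g]; simp
      · rw [Real.sign_of_pos g] at h
        rw [← h]
        exact ⟨fun k => by norm_num at k, fun _ => g.le, fun k => by norm_num at k⟩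
    · have hc : ∀ i, Continuous fun x => (Polynomial.derivative^[i] P).eval x :=
        fun i => Polynomial.continuous _
      simp only [Set.setOf_forall, Set.setOf_and]
      refine isClosed_iInter fun i => isClosed_iInter fun _ => ?_
      refine IsClosed.inter (isClosed_iInter fun _ => isClosed_eq (hc i) continuous_const)
        (IsClosed.inter (isClosed_iInter fun _ => isClosed_le continuous_const (hc i))
        (isClosed_iInter fun _ => isClosed_le (hc i) continuous_const))
  · intro b hb
    obtain ⟨a, ha⟩ := hne
    have hyp : ∀ i : ℕ, ((Polynomial.derivative^[i] P).eval a = 0 →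
          (Polynomial.derivative^[i] P).eval b = 0) ∧
        (0 < (Polynomial.derivative^[i] P).eval a →
          0 ≤ (Polynomial.derivative^[i] P).eval b) ∧
        ((Polynomial.derivative^[i] P).eval a < 0 →
          (Polynomial.derivative^[i] P).eval b ≤ 0) := by
      intro i
      by_cases hi : i ≤ P.natDegree
      · have h1 := ha i hi
        obtain ⟨b0, b1, b2⟩ := hb i hi
        refine ⟨fun g => b0 ?_, fun g => b1 ?_, fun g => b2 ?_⟩
        · rw [← h1, g, Real.sign_zero]
        · rw [← h1, Real.sign_of_pos g]
        · rw [← h1, Real.sign_of_neg g]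
      · rw [Polynomial.iterate_derivative_eq_zero (by omega)]; simp
    have mem : ∀ y, ((a < y ∧ y < b) ∨ (b < y ∧ y < a)) →
        y ∈ {x : ℝ | ∀ i : ℕ, i ≤ P.natDegree →
        Real.sign ((Polynomial.derivative^[i] P).eval x) = σ i} := by
      intro y hy i hi
      obtain ⟨k0, k1, k2⟩ := thom_step _ (Polynomial.derivative^[i] P) a b le_rfl
        (fun j => by
          have := hyp (j + i)
          simpa only [Function.iterate_add_apply] using this) y hy
      rw [← ha i hi]
      rcases lt_trichotomy ((Polynomial.derivative^[i] P).eval a) 0 with g | g | g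
      · rw [Real.sign_of_neg g, Real.sign_of_neg (k2 g)]
      · rw [g, k0 g]
      · rw [Real.sign_of_pos g, Real.sign_of_pos (k1 g)]
    rcases lt_trichotomy a b with g | g | g
    · have : b ∈ closure (Set.Ioo a b) := by
        rw [closure_Ioo g.ne]; exact ⟨g.le, le_rfl⟩
      exact closure_mono (fun y hy => mem y (Or.inl hy)) this
    · subst g; exact subset_closure ha
    · have : b ∈ closure (Set.Ioo b a) := by
        rw [closure_Ioo g.ne]; exact ⟨le_rfl, g.le⟩
      exact closure_mono (fun y hy => mem y (Or.inr hy)) this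
end

section
/- Let P be a nonzero polynomial with real coefficients of degree n, and let x ∈ ℝ be a root of P. Then x is the unique real number y with the following property: for every 0 ≤ i ≤ n, P^{(i)}(y) = 0 whenever P^{(i)}(x) = 0, P^{(i)}(y) ≥ 0 whenever P^{(i)}(x) > 0, and P^{(i)}(y) ≤ 0 whenever P^{(i)}(x) < 0. -/
theorem thom_aux_s4 (a b : ℝ) (hab : a < b) : ∀ (n : ℕ) (Q : Polynomial ℝ), Q ≠ 0 →
    Q.natDegree = n →
    (∀ i : ℕ, i ≤ n → 0 ≤ (Polynomial.derivative^[i] Q).eval a *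
      (Polynomial.derivative^[i] Q).eval b) →
    (∀ z ∈ Set.Ioo a b, 0 < Q.eval z) ∨ (∀ z ∈ Set.Ioo a b, Q.eval z < 0) := by
  intro n
  induction n with
  | zero =>
    intro Q hQ hn _
    obtain ⟨c, rfl⟩ := Polynomial.natDegree_eq_zero.mp hn
    have hc : c ≠ 0 := by
      rintro rfl
      simp at hQ
    rcases lt_or_gt_of_ne hc with h | h
    · right
      intro z _
      simpa using h
    · left
      intro z _
      simpa using h
  | succ n ih =>
    intro Q hQ hn hs
    have hd : (Polynomial.derivative Q).natDegree = n := by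
      rw [Polynomial.natDegree_derivative, hn]
      rfl
    have hQ' : Polynomial.derivative Q ≠ 0 := by
      intro h
      have := Polynomial.natDegree_eq_zero_of_derivative_eq_zero h
      omega
    have h0 := hs 0 (by omega)
    simp only [Function.iterate_zero, id] at h0
    have key := ih _ hQ' hd (fun i hi => by
      have := hs (i + 1) (by omega)
      simpa only [Function.iterate_succ_apply] using this)
    rcases key with key | key
    · have hm : StrictMonoOn (fun z => Q.eval z) (Set.Icc a b) := by
        apply strictMonoOn_of_deriv_pos (convex_Icc a b) Q.continuous.continuousOn
        intro z hz
        rw [interior_Icc] at hz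
        rw [Polynomial.deriv]
        exact key z hz
      by_cases h : 0 ≤ Q.eval a
      · left
        intro z hz
        exact h.trans_lt (hm ⟨le_rfl, hab.le⟩ ⟨hz.1.le, hz.2.le⟩ hz.1)
      · right
        intro z hz
        have h1 := hm ⟨hz.1.le, hz.2.le⟩ ⟨hab.le, le_rfl⟩ hz.2
        simp only at h1
        nlinarith
    · have hm : StrictAntiOn (fun z => Q.eval z) (Set.Icc a b) := by
        apply strictAntiOn_of_deriv_neg (convex_Icc a b) Q.continuous.continuousOn
        intro z hz
        rw [interior_Icc] at hz
        rw [Polynomial.deriv]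
        exact key z hz
      by_cases h : Q.eval a ≤ 0
      · right
        intro z hz
        exact (hm ⟨le_rfl, hab.le⟩ ⟨hz.1.le, hz.2.le⟩ hz.1).trans_le h
      · left
        intro z hz
        have h1 := hm ⟨hz.1.le, hz.2.le⟩ ⟨hab.le, le_rfl⟩ hz.2
        simp only at h1
        nlinarith

theorem thom_aux2_s4 (P : Polynomial ℝ) (hP : P ≠ 0) (a b : ℝ) (hab : a < b)
    (ha : P.eval a = 0) (hb : P.eval b = 0)
    (hs : ∀ i : ℕ, i ≤ P.natDegree → 0 ≤ (Polynomial.derivative^[i] P).eval a *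
      (Polynomial.derivative^[i] P).eval b) : False := by
  have hn : P.natDegree ≠ 0 := by
    intro h
    obtain ⟨c, rfl⟩ := Polynomial.natDegree_eq_zero.mp h
    simp at ha
    simp [ha] at hP
  have hQ' : Polynomial.derivative P ≠ 0 := fun h =>
    hn (Polynomial.natDegree_eq_zero_of_derivative_eq_zero h)
  have hd : (Polynomial.derivative P).natDegree = P.natDegree - 1 :=
    Polynomial.natDegree_derivative P
  have key := thom_aux_s4 a b hab _ _ hQ' hd (fun i hi => by
    have := hs (i + 1) (by omega)
    simpa only [Function.iterate_succ_apply] using this)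
  obtain ⟨c, hc, h⟩ := exists_deriv_eq_zero (f := fun z => P.eval z) hab
    P.continuous.continuousOn (ha.trans hb.symm)
  rw [Polynomial.deriv] at h
  rcases key with key | key
  · exact (key c hc).ne' h
  · exact (key c hc).ne h

/-- A real root `x` of a nonzero polynomial `P` of degree `n` is the unique point of the
realization of the weak sign condition associated to the Thom encoding of `x`. -/
theorem root_unique_in_weak_sign_condition
    (P : Polynomial ℝ) (hP : P ≠ 0) (x : ℝ) (hx : P.eval x = 0) :
    ∀ y : ℝ,
      (∀ i : ℕ, i ≤ P.natDegree →
        ((Polynomial.derivative^[i] P).eval x = 0 →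
          (Polynomial.derivative^[i] P).eval y = 0) ∧
        (0 < (Polynomial.derivative^[i] P).eval x →
          0 ≤ (Polynomial.derivative^[i] P).eval y) ∧
        ((Polynomial.derivative^[i] P).eval x < 0 →
          (Polynomial.derivative^[i] P).eval y ≤ 0))
      ↔ y = x := by
  intro y
  constructor
  · intro h
    have hy : P.eval y = 0 := (h 0 (by omega)).1 hx
    have hs : ∀ i : ℕ, i ≤ P.natDegree → 0 ≤ (Polynomial.derivative^[i] P).eval x *
        (Polynomial.derivative^[i] P).eval y := by
      intro i hi
      obtain ⟨_, h2, h3⟩ := h i hi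
      rcases lt_trichotomy ((Polynomial.derivative^[i] P).eval x) 0 with h | h | h
      · exact mul_nonneg_of_nonpos_of_nonpos h.le (h3 h)
      · simp [h]
      · exact mul_nonneg h.le (h2 h)
    by_contra hne
    rcases lt_or_gt_of_ne hne with hl | hl
    · exact thom_aux2_s4 P hP y x hl hy hx (fun i hi => by
        rw [mul_comm]
        exact hs i hi)
    · exact thom_aux2_s4 P hP x y hl hx hy hs
  · rintro rfl i _
    exact ⟨fun h => h, fun h => h.le, fun h => h.le⟩
end

section
/- Let n ≥ 1 and for each j ∈ {1, …, n} let f_j be a real polynomial in the variables X_1, …, X_j (viewed as a polynomial in X_1, …, X_n not involving X_{j+1}, …, X_n), and let d_j be the degree of f_j in the variable X_j. Let t = (t_1, …, t_n) ∈ ℝⁿ be a point such that for every j: f_j(t) = 0, and there exists 0 ≤ h ≤ d_j with (∂^h f_j / ∂X_j^h)(t) ≠ 0. Then t is the unique point y ∈ ℝⁿ with the following property: for every j ∈ {1, …, n} and every 0 ≤ h ≤ d_j, writing g = ∂^h f_j / ∂X_j^h (the h-fold partial derivative of f_j with respect to X_j), one has g(y) = 0 whenever g(t) = 0, g(y) ≥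 0 whenever g(t) > 0, and g(y) ≤ 0 whenever g(t) < 0. -/
def WS (s u : ℝ) : Prop := (s = 0 → u = 0) ∧ (0 < s → 0 ≤ u) ∧ (s < 0 → u ≤ 0)

theorem WS_between {s u v : ℝ} (h : WS s u) (hv : v ∈ Set.uIcc s u) : WS s v := by
  obtain ⟨h1, h2, h3⟩ := h
  rw [Set.mem_uIcc] at hv
  refine ⟨fun hs => ?_, fun hs => ?_, fun hs => ?_⟩
  · have := h1 hs
    rcases hv with hv | hv <;> linarith
  · have := h2 hs
    rcases hv with hv | hv <;> linarith
  · have := h3 hs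
    rcases hv with hv | hv <;> linarith

theorem thom_between (a b : ℝ) : ∀ (n : ℕ) (p : Polynomial ℝ), p.natDegree ≤ n →
    (∀ h : ℕ, WS ((Polynomial.derivative^[h] p).eval a) ((Polynomial.derivative^[h] p).eval b)) →
    ∀ x ∈ Set.uIcc a b, p.eval x ∈ Set.uIcc (p.eval a) (p.eval b) := by
  intro n
  induction n with
  | zero =>
    intro p hp _ x _
    rw [Polynomial.eq_C_of_natDegree_le_zero hp]
    simp
  | succ n ih =>
    intro p hp hW x hx
    have hd : p.derivative.natDegree ≤ n := by
      have := Polynomial.natDegree_derivative_le p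
      omega
    have hW' : ∀ h : ℕ, WS ((Polynomial.derivative^[h] p.derivative).eval a)
        ((Polynomial.derivative^[h] p.derivative).eval b) := fun h => by
      have := hW (h + 1)
      rwa [Function.iterate_succ_apply] at this
    have hb := ih p.derivative hd hW'
    have hs : ∀ z ∈ Set.uIcc a b, WS (p.derivative.eval a) (p.derivative.eval z) :=
      fun z hz => WS_between (hW' 0) (hb z hz)
    rcases le_total 0 (p.derivative.eval a) with h0 | h0
    · have hm : MonotoneOn (fun z => p.eval z) (Set.uIcc a b) := by
        apply monotoneOn_of_deriv_nonneg (convex_uIcc a b) p.continuous.continuousOn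
          p.differentiable.differentiableOn
        intro z hz
        obtain ⟨h1, h2, h3⟩ := hs z (interior_subset hz)
        rw [Polynomial.deriv]
        rcases h0.eq_or_lt with h | h
        · exact (h1 h.symm).ge
        · exact h2 h
      exact hm.mapsTo_uIcc hx
    · have hm : AntitoneOn (fun z => p.eval z) (Set.uIcc a b) := by
        apply antitoneOn_of_deriv_nonpos (convex_uIcc a b) p.continuous.continuousOn
          p.differentiable.differentiableOn
        intro z hz
        obtain ⟨h1, h2, h3⟩ := hs z (interior_subset hz)
        rw [Polynomial.deriv]
        rcases h0.eq_or_lt with h | h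
        · exact (h1 h).le
        · exact h3 h
      exact hm.mapsTo_uIcc hx

theorem thom_uni (a b : ℝ) (p : Polynomial ℝ) (hp : p ≠ 0) (ha : p.eval a = 0)
    (hW : ∀ h : ℕ, WS ((Polynomial.derivative^[h] p).eval a)
      ((Polynomial.derivative^[h] p).eval b)) : b = a := by
  by_contra hne
  have hb : p.eval b = 0 := (hW 0).1 ha
  have hz := thom_between a b _ p le_rfl hW
  rw [ha, hb] at hz
  apply hp
  apply Polynomial.eq_zero_of_infinite_isRoot
  have hinf : (Set.uIcc a b).Infinite := by
    apply Set.Icc_infinite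
    exact min_lt_max.2 (Ne.symm hne)
  refine hinf.mono fun x hx => ?_
  have := hz x hx
  simpa using this

noncomputable def sub1 {n : ℕ} (j : Fin n) (y : Fin n → ℝ) (i : Fin n) : Polynomial ℝ :=
  if i = j then Polynomial.X else Polynomial.C (y i)

theorem eval_sub1 {n : ℕ} (j : Fin n) (y : Fin n → ℝ) (g : MvPolynomial (Fin n) ℝ) :
    (MvPolynomial.aeval (sub1 j y) g).eval (y j) = MvPolynomial.eval y g := by
  induction g using MvPolynomial.induction_on with
  | C a => simp
  | add p q hp hq => simp [hp, hq]
  | mul_X p i hp =>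
    simp only [map_mul, MvPolynomial.aeval_X, Polynomial.eval_mul, hp, MvPolynomial.eval_X]
    by_cases h : i = j
    · subst h; simp [sub1]
    · simp [sub1, h]

theorem deriv_sub1 {n : ℕ} (j : Fin n) (y : Fin n → ℝ) (g : MvPolynomial (Fin n) ℝ) :
    MvPolynomial.aeval (sub1 j y) (MvPolynomial.pderiv j g)
      = Polynomial.derivative (MvPolynomial.aeval (sub1 j y) g) := by
  induction g using MvPolynomial.induction_on with
  | C a => simp
  | add p q hp hq => simp [hp, hq]
  | mul_X p i hp =>
    by_cases h : i = j
    · subst h; simp [Derivation.leibniz, hp, sub1]; ring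
    · simp [Derivation.leibniz, hp, sub1, h, MvPolynomial.pderiv_X_of_ne h]; ring

theorem iter_sub1 {n : ℕ} (j : Fin n) (y : Fin n → ℝ) (h : ℕ) (g : MvPolynomial (Fin n) ℝ) :
    MvPolynomial.aeval (sub1 j y) ((MvPolynomial.pderiv j)^[h] g)
      = Polynomial.derivative^[h] (MvPolynomial.aeval (sub1 j y) g) := by
  induction h with
  | zero => rfl
  | succ h ih => rw [Function.iterate_succ_apply', Function.iterate_succ_apply', deriv_sub1, ih]

theorem deg_sub1 {n : ℕ} (j : Fin n) (y : Fin n → ℝ) (g : MvPolynomial (Fin n) ℝ) :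
    (MvPolynomial.aeval (sub1 j y) g).natDegree ≤ g.degreeOf j := by
  rw [MvPolynomial.aeval_def, MvPolynomial.eval₂_eq']
  apply Polynomial.natDegree_sum_le_of_forall_le
  intro m hm
  refine (Polynomial.natDegree_C_mul_le _ _).trans ?_
  refine (Polynomial.natDegree_prod_le _ _).trans ?_
  refine le_trans ?_ (MvPolynomial.monomial_le_degreeOf j hm)
  calc _ ≤ ∑ i : Fin n, (if i = j then m j else 0) := by
        apply Finset.sum_le_sum
        intro i _
        by_cases h : i = j
        · subst h; simp [sub1]
        · simp only [sub1, h, if_false]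
          rw [← Polynomial.C_pow, Polynomial.natDegree_C]
    _ = m j := by simp

theorem congr_sub1 {n : ℕ} (j : Fin n) (y t : Fin n → ℝ) (g : MvPolynomial (Fin n) ℝ)
    (hg : ∀ i : Fin n, j < i → ∀ m ∈ g.support, m i = 0) (hy : ∀ i, i < j → y i = t i) :
    MvPolynomial.aeval (sub1 j y) g = MvPolynomial.aeval (sub1 j t) g := by
  rw [MvPolynomial.aeval_def, MvPolynomial.aeval_def, MvPolynomial.eval₂_eq',
    MvPolynomial.eval₂_eq']
  refine Finset.sum_congr rfl fun m hm => ?_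
  congr 1
  refine Finset.prod_congr rfl fun i _ => ?_
  rcases lt_trichotomy i j with h | h | h
  · simp [sub1, hy i h]
  · simp [sub1, h]
  · simp [hg i h m hm]


/-- Triangular Thom encodings characterize their associated point: given a triangular
system `f_j ∈ ℝ[X_1,…,X_j]`, `1 ≤ j ≤ n`, and a point `t` such that each `f_j`
vanishes at `t` and some iterated partial derivative `∂^h f_j/∂X_j^h` (`0 ≤ h ≤ d_j`,
`d_j = deg_{X_j} f_j`) does not vanish at `t`, the point `t` is the unique point of the
realization of the weak sign condition associated to the signs at `t` of all these
iterated partial derivatives. -/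
theorem triangular_thom_encoding_unique
    (n : ℕ) (hn : 1 ≤ n) (f : Fin n → MvPolynomial (Fin n) ℝ)
    (htri : ∀ j i : Fin n, j < i → ∀ m ∈ (f j).support, m i = 0)
    (t : Fin n → ℝ)
    (hroot : ∀ j : Fin n, MvPolynomial.eval t (f j) = 0)
    (hnz : ∀ j : Fin n, ∃ h : ℕ, h ≤ (f j).degreeOf j ∧
      MvPolynomial.eval t ((MvPolynomial.pderiv j)^[h] (f j)) ≠ 0) :
    ∀ y : Fin n → ℝ,
      (∀ j : Fin n, ∀ h : ℕ, h ≤ (f j).degreeOf j →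
        (MvPolynomial.eval t ((MvPolynomial.pderiv j)^[h] (f j)) = 0 →
          MvPolynomial.eval y ((MvPolynomial.pderiv j)^[h] (f j)) = 0) ∧
        (0 < MvPolynomial.eval t ((MvPolynomial.pderiv j)^[h] (f j)) →
          0 ≤ MvPolynomial.eval y ((MvPolynomial.pderiv j)^[h] (f j))) ∧
        (MvPolynomial.eval t ((MvPolynomial.pderiv j)^[h] (f j)) < 0 →
          MvPolynomial.eval y ((MvPolynomial.pderiv j)^[h] (f j)) ≤ 0))
      ↔ y = t := by
  intro y
  constructor
  · intro H
    have key : ∀ k : ℕ, ∀ j : Fin n, j.val = k → y j = t j := by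
      intro k
      induction k using Nat.strong_induction_on with
      | _ k ih =>
        intro j hj
        have hlt : ∀ i, i < j → y i = t i := fun i hi => ih i.val (by omega) i rfl
        have hc := congr_sub1 j y t (f j) (htri j) hlt
        have ht : ∀ h, MvPolynomial.eval t ((MvPolynomial.pderiv j)^[h] (f j)) =
            (Polynomial.derivative^[h] (MvPolynomial.aeval (sub1 j t) (f j))).eval (t j) :=
          fun h => by rw [← iter_sub1, eval_sub1]
        have hy : ∀ h, MvPolynomial.eval y ((MvPolynomial.pderiv j)^[h] (f j)) =
            (Polynomial.derivative^[h] (MvPolynomial.aeval (sub1 j t) (f j))).eval (y j) :=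
          fun h => by rw [← hc, ← iter_sub1, eval_sub1]
        apply thom_uni (t j) (y j) (MvPolynomial.aeval (sub1 j t) (f j))
        · intro h0
          obtain ⟨h, _, hh⟩ := hnz j
          rw [ht, h0] at hh
          simp at hh
        · rw [eval_sub1]; exact hroot j
        · intro h
          by_cases hd : h ≤ (f j).degreeOf j
          · have := H j h hd
            rw [ht, hy] at this
            exact this
          · rw [Polynomial.iterate_derivative_eq_zero
              (lt_of_le_of_lt (deg_sub1 j t (f j)) (not_le.1 hd))]
            simp [WS]
    funext j
    exact key j.val j rfl
  · rintro rfl j h _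
    exact ⟨id, le_of_lt, le_of_lt⟩
end

section
/- Let k ≥ 2, let a < b be real numbers, and for j = 2, …, k let h_j : (a, b) → ℝ be continuous functions with bounded image such that for some δ > 0 each h_j is monotone (nondecreasing or nonincreasing) on (a, a + δ) ∩ (a, b) and on (b − δ, b) ∩ (a, b). Let C = {(x, h_2(x), …, h_k(x)) : x ∈ (a, b)} ⊂ ℝᵏ, and for 2 ≤ j ≤ k let π_{1,j} : ℝᵏ → ℝ² denote the projection (x_1, …, x_k) ↦ (x_1, x_j). Then the topological closure of C equals the intersection over j = 2, …, k of the sets π_{1,j}^{-1}(clos(π_{1,j}(C))), where clos denotes topological closure. -/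
theorem aux_graph_lim (S : Set ℝ) (g : ℝ → ℝ) (c y L : ℝ)
    (hL : Filter.Tendsto g (nhdsWithin c S) (nhds L))
    (hy : (c, y) ∈ closure ((fun x => (x, g x)) '' S)) : y = L := by
  rw [mem_closure_iff_seq_limit] at hy
  obtain ⟨u, hu, hlim⟩ := hy
  choose x hxS hx using hu
  have h1 : Filter.Tendsto x Filter.atTop (nhds c) := by
    have := (continuous_fst.tendsto _).comp hlim
    refine this.congr fun n => ?_
    simp [← hx n]
  have h2 : Filter.Tendsto (fun n => g (x n)) Filter.atTop (nhds y) := by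
    have := (continuous_snd.tendsto _).comp hlim
    refine this.congr fun n => ?_
    simp [← hx n]
  have h3 : Filter.Tendsto x Filter.atTop (nhdsWithin c S) :=
    tendsto_nhdsWithin_iff.2 ⟨h1, Filter.Eventually.of_forall hxS⟩
  exact tendsto_nhds_unique h2 (hL.comp h3)

theorem aux_left (a d : ℝ) (g : ℝ → ℝ) (had : a < d)
    (hb : Bornology.IsBounded (g '' Set.Ioo a d))
    (hm : MonotoneOn g (Set.Ioo a d) ∨ AntitoneOn g (Set.Ioo a d)) :
    ∃ L, Filter.Tendsto g (nhdsWithin a (Set.Ioi a)) (nhds L) := by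
  rcases hm with hm | hm
  · exact ⟨_, hm.tendsto_nhdsWithin_Ioo_right (Set.nonempty_Ioo.2 had) hb.bddBelow⟩
  · have h2 : BddBelow ((fun x => - g x) '' Set.Ioo a d) := by
      obtain ⟨M, hM⟩ := hb.bddAbove
      refine ⟨-M, ?_⟩
      rintro _ ⟨x, hx, rfl⟩
      exact neg_le_neg (hM ⟨x, hx, rfl⟩)
    have := (hm.neg.tendsto_nhdsWithin_Ioo_right (Set.nonempty_Ioo.2 had) h2).neg
    exact ⟨_, by simpa using this⟩

theorem aux_right (d b : ℝ) (g : ℝ → ℝ) (had : d < b)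
    (hb : Bornology.IsBounded (g '' Set.Ioo d b))
    (hm : MonotoneOn g (Set.Ioo d b) ∨ AntitoneOn g (Set.Ioo d b)) :
    ∃ L, Filter.Tendsto g (nhdsWithin b (Set.Iio b)) (nhds L) := by
  rcases hm with hm | hm
  · exact ⟨_, hm.tendsto_nhdsWithin_Ioo_left (Set.nonempty_Ioo.2 had) hb.bddAbove⟩
  · have h2 : BddAbove ((fun x => - g x) '' Set.Ioo d b) := by
      obtain ⟨M, hM⟩ := hb.bddBelow
      refine ⟨-M, ?_⟩
      rintro _ ⟨x, hx, rfl⟩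
      exact neg_le_neg (hM ⟨x, hx, rfl⟩)
    have := (hm.neg.tendsto_nhdsWithin_Ioo_left (Set.nonempty_Ioo.2 had) h2).neg
    exact ⟨_, by simpa using this⟩

/-- The closure of a bounded curve segment in ℝᵏ (here `k = m + 2 ≥ 2`) parametrized by
its first coordinate (with coordinates continuous on `(a,b)`, of bounded image, and
eventually monotone near both endpoints) equals the intersection of the preimages of the
closures of its two-dimensional coordinate projections `π_{1,j}`, `2 ≤ j ≤ k`. -/
theorem closure_curve_segment_eq_iInter_proj
    (m : ℕ) (a b : ℝ) (hab : a < b)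
    (h : Fin (m + 2) → ℝ → ℝ)
    (hcont : ∀ j : Fin (m + 2), j ≠ 0 → ContinuousOn (h j) (Set.Ioo a b))
    (hbdd : ∀ j : Fin (m + 2), j ≠ 0 → Bornology.IsBounded (h j '' Set.Ioo a b))
    (δ : ℝ) (hδ : 0 < δ)
    (hmono_left : ∀ j : Fin (m + 2), j ≠ 0 →
      MonotoneOn (h j) (Set.Ioo a (a + δ) ∩ Set.Ioo a b) ∨
      AntitoneOn (h j) (Set.Ioo a (a + δ) ∩ Set.Ioo a b))
    (hmono_right : ∀ j : Fin (m + 2), j ≠ 0 →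
      MonotoneOn (h j) (Set.Ioo (b - δ) b ∩ Set.Ioo a b) ∨
      AntitoneOn (h j) (Set.Ioo (b - δ) b ∩ Set.Ioo a b))
    (C : Set (Fin (m + 2) → ℝ))
    (hC : C = {p : Fin (m + 2) → ℝ | ∃ x ∈ Set.Ioo a b,
      p = fun j => if j = 0 then x else h j x}) :
    closure C =
      ⋂ (j : Fin (m + 2)) (_ : j ≠ 0),
        (fun p : Fin (m + 2) → ℝ => (p 0, p j)) ⁻¹'
          closure ((fun p : Fin (m + 2) → ℝ => (p 0, p j)) '' C) := by
  have himg : ∀ j : Fin (m + 2), j ≠ 0 →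
      (fun p : Fin (m + 2) → ℝ => (p 0, p j)) '' C = (fun x => (x, h j x)) '' Set.Ioo a b := by
    intro j hj
    subst hC
    ext q
    constructor
    · rintro ⟨p, ⟨x, hx, rfl⟩, rfl⟩
      exact ⟨x, hx, by simp [hj]⟩
    · rintro ⟨x, hx, rfl⟩
      exact ⟨_, ⟨x, hx, rfl⟩, by simp [hj]⟩
  apply Set.Subset.antisymm
  · refine Set.subset_iInter₂ fun j hj => ?_
    have hc : Continuous (fun p : Fin (m + 2) → ℝ => (p 0, p j)) := by fun_prop
    exact fun p hp => image_closure_subset_closure_image hc ⟨p, hp, rfl⟩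
  · intro p hp
    have hp' : ∀ j : Fin (m + 2), j ≠ 0 →
        (p 0, p j) ∈ closure ((fun x => (x, h j x)) '' Set.Ioo a b) := by
      intro j hj
      rw [← himg j hj]
      exact Set.mem_iInter₂.1 hp j hj
    have hcl : p 0 ∈ closure (Set.Ioo a b) := by
      have h1 := image_closure_subset_closure_image continuous_fst
        ⟨_, hp' 1 (by simp), rfl⟩
      rw [Set.image_image] at h1
      simpa using h1
    have hI : p 0 ∈ Set.Icc a b := by rwa [closure_Ioo hab.ne] at hcl
    have hlim : ∀ j : Fin (m + 2), j ≠ 0 →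
        ∃ L, Filter.Tendsto (h j) (nhdsWithin (p 0) (Set.Ioo a b)) (nhds L) := by
      intro j hj
      rcases eq_or_lt_of_le hI.1 with ha | ha
      · rw [← ha]
        have hsub : Set.Ioo a (min (a + δ) b) ⊆ Set.Ioo a (a + δ) ∩ Set.Ioo a b :=
          fun x hx => ⟨⟨hx.1, hx.2.trans_le (min_le_left _ _)⟩,
            ⟨hx.1, hx.2.trans_le (min_le_right _ _)⟩⟩
        obtain ⟨L, hL⟩ := aux_left a (min (a + δ) b) (h j) (lt_min (by linarith) hab)
          ((hbdd j hj).subset (Set.image_mono fun x hx => (hsub hx).2))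
          ((hmono_left j hj).imp (fun H => H.mono hsub) (fun H => H.mono hsub))
        exact ⟨L, hL.mono_left (nhdsWithin_mono _ fun x hx => hx.1)⟩
      rcases eq_or_lt_of_le hI.2 with hb | hb
      · rw [hb]
        have hsub : Set.Ioo (max (b - δ) a) b ⊆ Set.Ioo (b - δ) b ∩ Set.Ioo a b :=
          fun x hx => ⟨⟨(le_max_left _ _).trans_lt hx.1, hx.2⟩,
            ⟨(le_max_right _ _).trans_lt hx.1, hx.2⟩⟩
        obtain ⟨L, hL⟩ := aux_right (max (b - δ) a) b (h j) (max_lt (by linarith) hab)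
          ((hbdd j hj).subset (Set.image_mono fun x hx => (hsub hx).2))
          ((hmono_right j hj).imp (fun H => H.mono hsub) (fun H => H.mono hsub))
        exact ⟨L, hL.mono_left (nhdsWithin_mono _ fun x hx => hx.2)⟩
      · exact ⟨_, hcont j hj (p 0) ⟨ha, hb⟩⟩
    have hne : (nhdsWithin (p 0) (Set.Ioo a b)).NeBot := mem_closure_iff_nhdsWithin_neBot.1 hcl
    have ht : Filter.Tendsto (fun x : ℝ => (fun j : Fin (m + 2) => if j = 0 then x else h j x))
        (nhdsWithin (p 0) (Set.Ioo a b)) (nhds p) := by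
      rw [tendsto_pi_nhds]
      intro j
      by_cases hj : j = 0
      · subst hj
        simp only [if_true]
        exact Filter.tendsto_id.mono_left nhdsWithin_le_nhds
      · obtain ⟨L, hL⟩ := hlim j hj
        rw [aux_graph_lim _ _ _ _ _ hL (hp' j hj)]
        simpa [hj] using hL
    refine mem_closure_of_tendsto ht ?_
    filter_upwards [self_mem_nhdsWithin] with x hx
    rw [hC]
    exact ⟨x, hx, rfl⟩
end
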